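/- Let n ≥ 1, let ε, e₁, e₃ > 0 and e₂ ≥ 0, and let V̄ : [0,∞) → (0,∞) be a positive C¹ increasing function with V̄(r) ≥ e₁ r^{2+ε} − e₂ and V̄'(r) ≤ e₃ V̄(r)^{3/2} for all r ≥ 0; set V(x) := V̄(|x|). Let φ₀ ∈ C²(ℝⁿ) be strictly positive with φ₀(x) → 0 as |x| → ∞, and suppose there exist R ≥ 0 and constants C₁ > 0, c₂ > 0, c₃ ≥ 0 such that (c₂V(x) − c₃)·φ₀(x) ≤ Δφ₀(x) ≤ C₁·V(x)·φ₀(x) for all |x| ≥ R. Then there exist R' ≥ R, constants a₁, a₂ > 0 and a₃, a₄ ∈ ℝ such that for all x with |x| ≥ R': exp( −a₁ ∫₀^{|x|} √(V̄(r)) dr + a₃ ) ≤ φ₀(x)² ≤ exp( −a₂|x|² + a₄ ). -/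

import Mathlib

open MeasureTheory

/-- The Laplacian of `f : ℝⁿ → ℝ`, as the sum of the repeated directional derivatives
along the coordinate directions. -/
noncomputable def laplacian {n : ℕ} (f : EuclideanSpace ℝ (Fin n) → ℝ)
    (x : EuclideanSpace ℝ (Fin n)) : ℝ :=
  ∑ i : Fin n, fderiv ℝ (fun y => fderiv ℝ f y (EuclideanSpace.single i 1)) x
    (EuclideanSpace.single i 1)

/-!
Both bounds come from comparing `φ₀` with radial barriers `exp (g |x|)`. If `q > 0`, a function
vanishing at infinity with `Δ u ≥ q u` lies, outside a large ball, below a multiple of any positive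
`v` with `Δ v ≤ q v`. The barriers satisfy `Δ e^g = (g'' + g'² + (d - 1) g' / r) e^g`.
For the upper bound, `V` grows at least quadratically, so `g = -b r² / 2` with small `b` gives a
supersolution. For the lower bound, take the WKB-type exponent `g = -a ∫₀^r √V`: here
`g'² = a² V`, while `V' ≤ e V^{3/2}` makes `g'' = -a V' / (2 √V) ≥ -(a e / 2) V`, so for large `a`
the barrier is a subsolution.
-/

open Bornology Filter Module Set Topology
open scoped Laplacian

section LocalMax

theorem deriv_deriv_nonpos_of_isLocalMax {g : ℝ → ℝ} {t : ℝ} (hmax : IsLocalMax g t)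
    (hg : ContinuousAt g t) : deriv (deriv g) t ≤ 0 := by
  by_contra! hpos
  have hmin : IsLocalMin g t := isLocalMin_of_deriv_deriv_pos hpos hmax.deriv_eq_zero hg
  have hconst : g =ᶠ[𝓝 t] fun _ ↦ g t := by
    filter_upwards [hmax, hmin] with s hle hge using le_antisymm hle hge
  simp [hconst.deriv.deriv_eq] at hpos

variable {E : Type*} [NormedAddCommGroup E]

theorem deriv_deriv_comp_add_smul [NormedSpace ℝ E] {f : E → ℝ} {x e : E} {t : ℝ}
    (hf : ContDiffAt ℝ 2 f (x + t • e)) :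
    deriv (deriv fun s : ℝ ↦ f (x + s • e)) t = iteratedFDeriv ℝ 2 f (x + t • e) fun _ ↦ e := by
  have hline : ContinuousAt (fun s : ℝ ↦ x + s • e) t := by fun_prop
  have hfirst : deriv (fun s : ℝ ↦ f (x + s • e)) =ᶠ[𝓝 t]
      fun s ↦ iteratedFDeriv ℝ 1 f (x + s • e) fun _ ↦ e := by
    filter_upwards [hline.eventually (hf.eventually (by simp))] with s hs
    rw [(hs.differentiableAt (by simp)).deriv_comp_add_smul, iteratedFDeriv_one_apply]
  rw [hfirst.deriv_eq]
  exact hf.deriv_fderiv_add_smul (n := 1)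

theorem iteratedFDeriv_two_nonpos_of_isLocalMax [NormedSpace ℝ E] {f : E → ℝ} {x : E}
    (hf : ContDiffAt ℝ 2 f x) (hmax : IsLocalMax f x) (e : E) :
    iteratedFDeriv ℝ 2 f x (fun _ ↦ e) ≤ 0 := by
  have hx : x + (0 : ℝ) • e = x := by simp
  have hline : ContinuousAt (fun t : ℝ ↦ x + t • e) 0 := by fun_prop
  rw [← hx] at hf hmax ⊢
  rw [← deriv_deriv_comp_add_smul hf]
  exact deriv_deriv_nonpos_of_isLocalMax (hline.eventually hmax)
    (hf.continuousAt.comp (f := fun t : ℝ ↦ x + t • e) hline)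

theorem laplacian_nonpos_of_isLocalMax [InnerProductSpace ℝ E] [FiniteDimensional ℝ E]
    {f : E → ℝ} {x : E} (hf : ContDiffAt ℝ 2 f x) (hmax : IsLocalMax f x) : Δ f x ≤ 0 := by
  rw [InnerProductSpace.laplacian_eq_iteratedFDeriv_stdOrthonormalBasis]
  refine Finset.sum_nonpos fun i _ ↦ ?_
  simpa [iteratedFDeriv_two_apply] using iteratedFDeriv_two_nonpos_of_isLocalMax hf hmax _

end LocalMax

section Comparison

variable {E : Type*} [NormedAddCommGroup E] [InnerProductSpace ℝ E] [FiniteDimensional ℝ E]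
  {q u v : E → ℝ}

/- At a positive maximum of `u - v` one would have
`0 < q * (u - v) ≤ Δ u - Δ v = Δ (u - v) ≤ 0`. -/
theorem le_on_of_subsolution_of_supersolution {Ω : Set E} (hΩ : IsOpen Ω)
    (huc : ContinuousOn u (closure Ω)) (hvc : ContinuousOn v (closure Ω))
    (hu : ∀ x ∈ Ω, ContDiffAt ℝ 2 u x) (hv : ∀ x ∈ Ω, ContDiffAt ℝ 2 v x)
    (hq : ∀ x ∈ Ω, 0 < q x) (hsub : ∀ x ∈ Ω, q x * u x ≤ Δ u x)
    (hsuper : ∀ x ∈ Ω, Δ v x ≤ q x * v x) (hfrontier : ∀ x ∈ frontier Ω, u x ≤ v x)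
    (hinfty : ∀ δ > 0, ∀ᶠ x in cobounded E ⊓ 𝓟 (closure Ω), u x ≤ v x + δ) :
    ∀ x ∈ Ω, u x ≤ v x := by
  intro x hx
  by_contra! hlt
  obtain ⟨z, hz, hzmax⟩ := (huc.sub hvc).exists_isMaxOn' isClosed_closure (subset_closure hx) (by
    rw [← Metric.cobounded_eq_cocompact]
    filter_upwards [hinfty _ (sub_pos.2 hlt)] with y hy
    simp only [Pi.sub_apply]
    linarith)
  have hzlt : v z < u z := by
    have hxz : u x - v x ≤ u z - v z := hzmax (subset_closure hx)
    linarith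
  have hzΩ : z ∈ Ω := by
    by_contra hzΩ
    exact hzlt.not_ge (hfrontier z (hΩ.frontier_eq ▸ ⟨hz, hzΩ⟩))
  have hlocmax : IsLocalMax (u - v) z :=
    (hzmax.on_subset subset_closure).isLocalMax (hΩ.mem_nhds hzΩ)
  have hlap : Δ u z - Δ v z ≤ 0 := (hu z hzΩ).laplacian_sub (hv z hzΩ) ▸
    laplacian_nonpos_of_isLocalMax ((hu z hzΩ).sub (hv z hzΩ)) hlocmax
  have hgap : q z * v z < q z * u z := mul_lt_mul_of_pos_left hzlt (hq z hzΩ)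
  linarith [hsub z hzΩ, hsuper z hzΩ]

theorem exists_pos_eventually_le_mul_of_subsolution_of_supersolution
    (hu : ∀ᶠ x in cobounded E, ContDiffAt ℝ 2 u x) (hv : ∀ᶠ x in cobounded E, ContDiffAt ℝ 2 v x)
    (hq : ∀ᶠ x in cobounded E, 0 < q x) (hsub : ∀ᶠ x in cobounded E, q x * u x ≤ Δ u x)
    (hsuper : ∀ᶠ x in cobounded E, Δ v x ≤ q x * v x) (hv0 : ∀ᶠ x in cobounded E, 0 < v x)
    (hu0 : Tendsto u (cobounded E) (𝓝 0)) :
    ∃ M > 0, ∀ᶠ x in cobounded E, u x ≤ M * v x := by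
  obtain ⟨ρ, -, hρ⟩ := hasBasis_cobounded_norm.eventually_iff.1
    (hu.and (hv.and (hq.and (hsub.and (hsuper.and hv0)))))
  simp only [mem_ofPred_eq] at hρ
  choose hu hv hq hsub hsuper hv0 using @hρ
  have huc : ContinuousOn u {x | ρ ≤ ‖x‖} := fun x hx ↦ (hu hx).continuousAt.continuousWithinAt
  have hvc : ContinuousOn v {x | ρ ≤ ‖x‖} := fun x hx ↦ (hv hx).continuousAt.continuousWithinAt
  have hsphere : Metric.sphere (0 : E) ρ ⊆ {x | ρ ≤ ‖x‖} := fun x hx ↦ by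
    simpa using (mem_sphere_zero_iff_norm.1 hx).ge
  obtain ⟨B, hB⟩ := (isCompact_sphere (0 : E) ρ).bddAbove_image
    ((huc.div hvc fun x hx ↦ (hv0 hx).ne').mono hsphere)
  have hclosure : closure {x : E | ρ < ‖x‖} ⊆ {x | ρ ≤ ‖x‖} :=
    closure_lt_subset_le continuous_const continuous_norm
  have hM : 0 < max B 1 := by positivity
  refine ⟨max B 1, hM, ?_⟩
  filter_upwards [tendsto_norm_cobounded_atTop.eventually_gt_atTop ρ] with x hx
  refine le_on_of_subsolution_of_supersolution (v := max B 1 • v)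
    (isOpen_lt continuous_const continuous_norm) (huc.mono hclosure)
    ((hvc.mono hclosure).const_smul _) (fun y hy ↦ hu (le_of_lt hy))
    (fun y hy ↦ contDiffAt_const.smul (hv (le_of_lt hy))) (fun y hy ↦ hq (le_of_lt hy))
    (fun y hy ↦ hsub (le_of_lt hy)) (fun y hy ↦ ?_) (fun y hy ↦ ?_) (fun δ hδ ↦ ?_) x hx
  · rw [InnerProductSpace.laplacian_smul _ (hv (le_of_lt hy)), Pi.smul_apply, smul_eq_mul,
      smul_eq_mul, mul_left_comm]
    exact mul_le_mul_of_nonneg_left (hsuper (le_of_lt hy)) hM.le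
  · have hyρ : ρ = ‖y‖ := frontier_lt_subset_eq continuous_const continuous_norm hy
    have hratio : u y / v y ≤ max B 1 := (hB ⟨y, by simp [hyρ], rfl⟩).trans (le_max_left _ _)
    exact (div_le_iff₀ (hv0 hyρ.le)).1 hratio
  · filter_upwards [(hu0.eventually_le_const hδ).filter_mono inf_le_left,
      eventually_inf_principal.2 (.of_forall fun y hy ↦ hv0 (hclosure hy))] with y hyδ hvy
    have hMv : 0 ≤ max B 1 * v y := by positivity
    simp only [Pi.smul_apply, smul_eq_mul]
    linarith

end Comparison

section Radial

theorem differentiableAt_deriv_of_contDiffAt {h : ℝ → ℝ} {r : ℝ} (hh : ContDiffAt ℝ 2 h r) :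
    DifferentiableAt ℝ (deriv h) r :=
  ((hh.fderiv_right (m := 1) (by norm_num)).differentiableAt (by simp)).clm_apply
    (differentiableAt_const 1)

/-- The nonlinear operator `g ↦ g'' + g'² + (d - 1) g' / r`, which is the potential `Δ v / v` of
the radial function `v = exp (g ‖x‖)` in dimension `d` (see `laplacian_exp_comp_norm`). -/
noncomputable def radialPotential (d : ℕ) (g : ℝ → ℝ) (r : ℝ) : ℝ :=
  deriv (deriv g) r + deriv g r ^ 2 + (d - 1) / r * deriv g r


variable {E : Type*} [NormedAddCommGroup E] [InnerProductSpace ℝ E]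

theorem hasFDerivAt_norm {x : E} (hx : x ≠ 0) :
    HasFDerivAt (fun y : E ↦ ‖y‖) (‖x‖⁻¹ • innerSL ℝ x) x := by
  have h := (hasStrictFDerivAt_norm_sq x).hasFDerivAt.sqrt (by positivity)
  simp only [Real.sqrt_sq (norm_nonneg _)] at h
  refine h.congr_fderiv ?_
  rw [← ofNat_smul_eq_nsmul ℝ 2 (innerSL ℝ x), smul_smul]
  congr 1
  field_simp

theorem hasFDerivAt_comp_norm {h : ℝ → ℝ} {x : E} (hx : x ≠ 0) (hh : DifferentiableAt ℝ h ‖x‖) :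
    HasFDerivAt (fun y : E ↦ h ‖y‖) ((deriv h ‖x‖ / ‖x‖) • innerSL ℝ x) x := by
  rw [div_eq_mul_inv, ← smul_smul]
  exact hh.hasDerivAt.comp_hasFDerivAt x (hasFDerivAt_norm hx)

variable [FiniteDimensional ℝ E]

theorem laplacian_eq_of_fderiv_eq_smul_innerSL {f ψ : E → ℝ} {ψ' : E →L[ℝ] ℝ} {x : E}
    (hf : fderiv ℝ f =ᶠ[𝓝 x] fun y ↦ ψ y • innerSL ℝ y) (hψ : HasFDerivAt ψ ψ' x) :
    Δ f x = finrank ℝ E * ψ x + ψ' x := by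
  let b := stdOrthonormalBasis ℝ E
  have hterm (i) : iteratedFDeriv ℝ 2 f x ![b i, b i] = ψ x + ψ' (inner ℝ (b i) x • b i) := by
    rw [iteratedFDeriv_two_apply, hf.fderiv_eq,
      (hψ.fun_smul (innerSL ℝ (E := E)).hasFDerivAt).fderiv]
    have hinner (y z : E) : innerSL ℝ y z = inner ℝ y z := innerSL_apply_apply ℝ y z
    simp [hinner, real_inner_comm, mul_comm]
  calc Δ f x = ∑ i, iteratedFDeriv ℝ 2 f x ![b i, b i] := by
        rw [InnerProductSpace.laplacian_eq_iteratedFDeriv_orthonormalBasis f b]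
    _ = ∑ _i : Fin (finrank ℝ E), ψ x + ψ' (∑ i, inner ℝ (b i) x • b i) := by
        rw [Finset.sum_congr rfl fun i _ ↦ hterm i, Finset.sum_add_distrib, map_sum]
    _ = finrank ℝ E * ψ x + ψ' x := by
        simp [b.sum_repr']

theorem laplacian_comp_norm {h : ℝ → ℝ} {x : E} (hx : x ≠ 0) (hh : ContDiffAt ℝ 2 h ‖x‖) :
    Δ (fun y : E ↦ h ‖y‖) x =
      deriv (deriv h) ‖x‖ + (finrank ℝ E - 1) / ‖x‖ * deriv h ‖x‖ := by
  have hgrad : fderiv ℝ (fun y : E ↦ h ‖y‖) =ᶠ[𝓝 x]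
      fun y ↦ (deriv h ‖y‖ / ‖y‖) • innerSL ℝ y := by
    filter_upwards [isOpen_ne.mem_nhds hx,
      continuous_norm.continuousAt.eventually (hh.eventually (by simp))] with y hy hhy
    exact (hasFDerivAt_comp_norm hy (hhy.differentiableAt (by simp))).fderiv
  have hh' : DifferentiableAt ℝ (deriv h) ‖x‖ := differentiableAt_deriv_of_contDiffAt hh
  have hx' : ‖x‖ ≠ 0 := norm_ne_zero_iff.2 hx
  have hψ := hasFDerivAt_comp_norm hx (hh'.fun_div differentiableAt_fun_id hx')
  rw [laplacian_eq_of_fderiv_eq_smul_innerSL hgrad hψ,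
    deriv_fun_div hh' differentiableAt_fun_id hx']
  simp only [deriv_id'', smul_apply, coe_innerSL_apply, real_inner_self_eq_norm_sq, smul_eq_mul]
  field_simp
  ring

theorem laplacian_exp_comp_norm {g : ℝ → ℝ} {x : E} (hx : x ≠ 0) (hg : ContDiffAt ℝ 2 g ‖x‖) :
    Δ (fun y : E ↦ Real.exp (g ‖y‖)) x =
      radialPotential (finrank ℝ E) g ‖x‖ * Real.exp (g ‖x‖) := by
  have hderiv : deriv (fun r ↦ Real.exp (g r)) =ᶠ[𝓝 ‖x‖] fun r ↦ Real.exp (g r) * deriv g r := by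
    filter_upwards [hg.eventually (by simp)] with r hr
    exact deriv_exp (hr.differentiableAt (by simp))
  have hg₁ : DifferentiableAt ℝ g ‖x‖ := hg.differentiableAt (by simp)
  have hg₂ : DifferentiableAt ℝ (deriv g) ‖x‖ := differentiableAt_deriv_of_contDiffAt hg
  rw [laplacian_comp_norm hx hg.exp, hderiv.deriv_eq, hderiv.eq_of_nhds,
    deriv_fun_mul hg₁.exp hg₂, deriv_exp hg₁, radialPotential]
  ring

end Radial

section Barrier

variable {E : Type*} [NormedAddCommGroup E] [InnerProductSpace ℝ E] {q φ : E → ℝ} {g : ℝ → ℝ}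

theorem eventually_contDiffAt_exp_comp_norm (hg : ∀ᶠ r in atTop, ContDiffAt ℝ 2 g r) :
    ∀ᶠ x in cobounded E, ContDiffAt ℝ 2 (fun y : E ↦ Real.exp (g ‖y‖)) x := by
  filter_upwards [tendsto_norm_cobounded_atTop.eventually hg,
    tendsto_norm_cobounded_atTop.eventually_gt_atTop 0] with x hgx hx
  exact (hgx.comp x (contDiffAt_norm ℝ (norm_pos_iff.1 hx))).exp

variable [FiniteDimensional ℝ E]

theorem exists_eventually_le_exp_of_radialPotential_le
    (hφ : ∀ᶠ x in cobounded E, ContDiffAt ℝ 2 φ x) (hφ₀ : Tendsto φ (cobounded E) (𝓝 0))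
    (hq : ∀ᶠ x in cobounded E, 0 < q x) (hsub : ∀ᶠ x in cobounded E, q x * φ x ≤ Δ φ x)
    (hg : ∀ᶠ r in atTop, ContDiffAt ℝ 2 g r)
    (hgq : ∀ᶠ x in cobounded E, radialPotential (finrank ℝ E) g ‖x‖ ≤ q x) :
    ∃ c, ∀ᶠ x in cobounded E, φ x ≤ Real.exp (g ‖x‖ + c) := by
  have hsuper : ∀ᶠ x in cobounded E,
      Δ (fun y : E ↦ Real.exp (g ‖y‖)) x ≤ q x * Real.exp (g ‖x‖) := by
    filter_upwards [hgq, tendsto_norm_cobounded_atTop.eventually hg,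
      tendsto_norm_cobounded_atTop.eventually_gt_atTop 0] with x hqx hgx hx
    rw [laplacian_exp_comp_norm (norm_pos_iff.1 hx) hgx]
    exact mul_le_mul_of_nonneg_right hqx (Real.exp_pos _).le
  obtain ⟨M, hM, hle⟩ := exists_pos_eventually_le_mul_of_subsolution_of_supersolution hφ
    (eventually_contDiffAt_exp_comp_norm hg) hq hsub hsuper
    (.of_forall fun _ ↦ Real.exp_pos _) hφ₀
  refine ⟨Real.log M, hle.mono fun x hx ↦ ?_⟩
  rwa [Real.exp_add, Real.exp_log hM, mul_comm]

theorem exists_eventually_exp_le_of_le_radialPotential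
    (hφ : ∀ᶠ x in cobounded E, ContDiffAt ℝ 2 φ x) (hφpos : ∀ᶠ x in cobounded E, 0 < φ x)
    (hq : ∀ᶠ x in cobounded E, 0 < q x) (hsuper : ∀ᶠ x in cobounded E, Δ φ x ≤ q x * φ x)
    (hg : ∀ᶠ r in atTop, ContDiffAt ℝ 2 g r) (hgbot : Tendsto g atTop atBot)
    (hqg : ∀ᶠ x in cobounded E, q x ≤ radialPotential (finrank ℝ E) g ‖x‖) :
    ∃ c, ∀ᶠ x in cobounded E, Real.exp (g ‖x‖ + c) ≤ φ x := by
  have hsub : ∀ᶠ x in cobounded E,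
      q x * Real.exp (g ‖x‖) ≤ Δ (fun y : E ↦ Real.exp (g ‖y‖)) x := by
    filter_upwards [hqg, tendsto_norm_cobounded_atTop.eventually hg,
      tendsto_norm_cobounded_atTop.eventually_gt_atTop 0] with x hqx hgx hx
    rw [laplacian_exp_comp_norm (norm_pos_iff.1 hx) hgx]
    exact mul_le_mul_of_nonneg_right hqx (Real.exp_pos _).le
  obtain ⟨M, hM, hle⟩ := exists_pos_eventually_le_mul_of_subsolution_of_supersolution
    (eventually_contDiffAt_exp_comp_norm hg) hφ hq hsub hsuper hφpos
    (Real.tendsto_exp_atBot.comp (hgbot.comp tendsto_norm_cobounded_atTop))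
  refine ⟨-Real.log M, hle.mono fun x hx ↦ ?_⟩
  rwa [Real.exp_add, Real.exp_neg, Real.exp_log hM, mul_inv_le_iff₀ hM, mul_comm]

theorem radialPotential_neg_mul_sq (d : ℕ) (b : ℝ) {r : ℝ} (hr : r ≠ 0) :
    radialPotential d (fun s ↦ -b / 2 * s ^ 2) r = b ^ 2 * r ^ 2 - b * d := by
  have hderiv : deriv (fun s : ℝ ↦ -b / 2 * s ^ 2) = fun s ↦ -b * s := by
    ext s
    rw [deriv_const_mul _ (by fun_prop), deriv_pow_field]
    push_cast
    ring
  simp only [radialPotential, hderiv, deriv_const_mul_id']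
  field_simp
  ring

theorem exists_eventually_le_exp_neg_mul_sq {b : ℝ} (hb : 0 < b)
    (hφ : ∀ᶠ x in cobounded E, ContDiffAt ℝ 2 φ x) (hφ₀ : Tendsto φ (cobounded E) (𝓝 0))
    (hsub : ∀ᶠ x in cobounded E, b ^ 2 * ‖x‖ ^ 2 * φ x ≤ Δ φ x) :
    ∃ c, ∀ᶠ x in cobounded E, φ x ≤ Real.exp (-b / 2 * ‖x‖ ^ 2 + c) := by
  have hx₀ : ∀ᶠ x in cobounded E, 0 < ‖x‖ :=
    tendsto_norm_cobounded_atTop.eventually_gt_atTop 0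
  refine exists_eventually_le_exp_of_radialPotential_le (g := fun r ↦ -b / 2 * r ^ 2) hφ hφ₀
    (hx₀.mono fun x hx ↦ by positivity) hsub (.of_forall fun r ↦ by fun_prop) ?_
  filter_upwards [hx₀] with x hx
  have hbd : 0 ≤ b * finrank ℝ E := by positivity
  rw [radialPotential_neg_mul_sq _ _ hx.ne']
  linarith

end Barrier

section IntegralSqrt

theorem contDiffAt_add_one_of_hasDerivAt {f f' : ℝ → ℝ} {r : ℝ} {n : ℕ}
    (hf : ∀ᶠ s in 𝓝 r, HasDerivAt f (f' s) s) (hf' : ContDiffAt ℝ n f' r) :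
    ContDiffAt ℝ (n + 1) f r :=
  contDiffAt_succ_iff_hasFDerivAt.2 ⟨fun s ↦ .toSpanSingleton ℝ (f' s),
    ⟨_, hf, fun _ hs ↦ hs.hasFDerivAt⟩,
    (ContinuousLinearMap.toSpanSingletonCLE (𝕜 := ℝ) (E := ℝ)).contDiff.contDiffAt.comp r hf'⟩

theorem tendsto_atTop_of_le_hasDerivAt {f f' : ℝ → ℝ} {c : ℝ} (hc : 0 < c)
    (hf : ∀ᶠ r in atTop, HasDerivAt f (f' r) r) (hf' : ∀ᶠ r in atTop, c ≤ f' r) :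
    Tendsto f atTop atTop := by
  obtain ⟨ρ, hρ⟩ := eventually_atTop.1 (hf.and hf')
  have hlower : ∀ᶠ r in atTop, f ρ + c * (r - ρ) ≤ f r := by
    filter_upwards [eventually_ge_atTop ρ] with r hr
    have hmvt := (convex_Ici ρ).mul_sub_le_image_sub_of_le_deriv (f := f) (C := c)
      (fun s hs ↦ (hρ s hs).1.continuousAt.continuousWithinAt)
      (fun s hs ↦ (hρ s (interior_subset hs)).1.differentiableAt.differentiableWithinAt)
      (fun s hs ↦ (hρ s (interior_subset hs)).1.deriv ▸ (hρ s (interior_subset hs)).2)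
      ρ self_mem_Ici r hr hr
    linarith
  exact tendsto_atTop_mono' _ hlower (tendsto_atTop_add_const_left _ _
    ((tendsto_atTop_add_const_right _ _ tendsto_id).const_mul_atTop hc))

theorem hasDerivAt_integral_of_continuousOn_Ici {f : ℝ → ℝ} {a r : ℝ}
    (hf : ContinuousOn f (Ici a)) (hr : a < r) :
    HasDerivAt (fun r ↦ ∫ s in a..r, f s) (f r) r := by
  refine intervalIntegral.integral_hasDerivAt_right ?_ ?_ (hf.continuousAt (Ici_mem_nhds hr))
  · exact (hf.mono fun s hs ↦ (uIcc_of_le hr.le ▸ hs).1).intervalIntegrable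
  · exact (hf.mono Ioi_subset_Ici_self).stronglyMeasurableAtFilter isOpen_Ioi r hr

theorem contDiffAt_add_one_integral {f : ℝ → ℝ} {a r : ℝ} {n : ℕ}
    (hf : ContinuousOn f (Ici a)) (hr : a < r) (hfr : ContDiffAt ℝ n f r) :
    ContDiffAt ℝ (n + 1) (fun r ↦ ∫ s in a..r, f s) r := by
  refine contDiffAt_add_one_of_hasDerivAt ?_ hfr
  filter_upwards [eventually_gt_nhds hr] with s hs
  exact hasDerivAt_integral_of_continuousOn_Ici hf hs

theorem div_two_mul_sqrt_le_of_le_mul_rpow {v v' e : ℝ} (hv : 0 < v)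
    (hv' : v' ≤ e * v ^ (3 / 2 : ℝ)) : v' / (2 * √v) ≤ e / 2 * v := by
  have hrpow : v ^ (3 / 2 : ℝ) = v * √v := by
    rw [Real.sqrt_eq_rpow, ← Real.rpow_one_add' hv.le (by norm_num)]
    norm_num
  rw [div_le_iff₀ (by positivity)]
  calc v' ≤ e * (v * √v) := hrpow ▸ hv'
    _ = e / 2 * v * (2 * √v) := by ring

variable {V : ℝ → ℝ}

theorem radialPotential_neg_mul_integral_sqrt (hV : ContinuousOn V (Ici 0)) (d : ℕ) (a : ℝ)
    {r : ℝ} (hr : 0 < r) (hVr : DifferentiableAt ℝ V r) (hpos : 0 < V r) :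
    radialPotential d (fun r ↦ -a * ∫ s in (0 : ℝ)..r, √(V s)) r =
      a ^ 2 * V r - a * (deriv V r / (2 * √(V r))) - a * ((d - 1) / r * √(V r)) := by
  have hderiv : deriv (fun r ↦ -a * ∫ s in (0 : ℝ)..r, √(V s)) =ᶠ[𝓝 r] fun s ↦ -a * √(V s) := by
    filter_upwards [eventually_gt_nhds hr] with s hs
    exact ((hasDerivAt_integral_of_continuousOn_Ici hV.sqrt hs).const_mul _).deriv
  rw [radialPotential, hderiv.deriv_eq, hderiv.eq_of_nhds,
    deriv_const_mul _ (hVr.sqrt hpos.ne'), deriv_sqrt hVr hpos.ne', mul_pow, Real.sq_sqrt hpos.le]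
  ring

/- All three terms of the potential are at most of order `V`, but the positive one is quadratic in
the coefficient of the integral and the other two are linear. -/
theorem mul_le_radialPotential_neg_mul_integral_sqrt (hV : ContinuousOn V (Ici 0)) (d : ℕ)
    {C δ e r : ℝ} (hC : 0 ≤ C) (hδ : 0 < δ) (he : 0 ≤ e) (hr : 1 ≤ r)
    (hVr : DifferentiableAt ℝ V r) (hδV : δ ≤ V r) (hV' : deriv V r ≤ e * V r ^ (3 / 2 : ℝ)) :
    C * V r ≤ radialPotential d
      (fun r ↦ -(e / 2 + d / √δ + C + 1) * ∫ s in (0 : ℝ)..r, √(V s)) r := by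
  have hpos : 0 < V r := hδ.trans_le hδV
  have hsqrt : √(V r) ≤ V r / √δ := by
    rw [le_div_iff₀ (by positivity)]
    calc √(V r) * √δ ≤ √(V r) * √(V r) := by gcongr
      _ = V r := Real.mul_self_sqrt hpos.le
  have hfirst : (d - 1) / r * √(V r) ≤ d / √δ * V r := by
    have hcoeff : (d - 1) / r ≤ (d : ℝ) := by
      rw [div_le_iff₀ (by positivity)]
      nlinarith [(Nat.cast_nonneg d : (0 : ℝ) ≤ d)]
    calc (d - 1) / r * √(V r) ≤ d * √(V r) := by gcongr
      _ ≤ d * (V r / √δ) := by gcongr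
      _ = d / √δ * V r := by ring
  have hsecond := div_two_mul_sqrt_le_of_le_mul_rpow hpos hV'
  rw [radialPotential_neg_mul_integral_sqrt hV d _ (by positivity) hVr hpos]
  set a := e / 2 + d / √δ + C + 1 with ha
  have ha₁ : 1 ≤ a := by
    have : 0 ≤ e / 2 + d / √δ + C := by positivity
    linarith
  calc C * V r ≤ a * (a - e / 2 - d / √δ) * V r := by
        gcongr
        nlinarith
    _ = a ^ 2 * V r - a * (e / 2 * V r) - a * (d / √δ * V r) := by ring
    _ ≤ _ := by gcongr

theorem exists_eventually_exp_neg_mul_integral_sqrt_le {E : Type*} [NormedAddCommGroup E]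
    [InnerProductSpace ℝ E] [FiniteDimensional ℝ E] {φ : E → ℝ} {C δ e : ℝ}
    (hC : 0 < C) (hδ : 0 < δ) (he : 0 ≤ e)
    (hφ : ∀ᶠ x in cobounded E, ContDiffAt ℝ 2 φ x) (hφpos : ∀ᶠ x in cobounded E, 0 < φ x)
    (hV : ContinuousOn V (Ici 0)) (hV₁ : ∀ᶠ r in atTop, ContDiffAt ℝ 1 V r)
    (hδV : ∀ᶠ r in atTop, δ ≤ V r) (hV' : ∀ᶠ r in atTop, deriv V r ≤ e * V r ^ (3 / 2 : ℝ))
    (hsuper : ∀ᶠ x in cobounded E, Δ φ x ≤ C * V ‖x‖ * φ x) :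
    ∃ a > 0, ∃ c, ∀ᶠ x in cobounded E,
      Real.exp (-a * (∫ r in (0 : ℝ)..‖x‖, √(V r)) + c) ≤ φ x := by
  have ha : 0 < e / 2 + finrank ℝ E / √δ + C + 1 := by positivity
  refine ⟨_, ha, exists_eventually_exp_le_of_le_radialPotential (q := fun x ↦ C * V ‖x‖)
    (g := fun r ↦ -_ * ∫ s in (0 : ℝ)..r, √(V s)) hφ hφpos ?_ hsuper ?_ ?_ ?_⟩
  · filter_upwards [tendsto_norm_cobounded_atTop.eventually hδV] with x hx
    exact mul_pos hC (hδ.trans_le hx)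
  · filter_upwards [eventually_gt_atTop 0, hV₁, hδV] with r hr hVr hδr
    exact contDiffAt_const.mul
      (contDiffAt_add_one_integral (n := 1) hV.sqrt hr (hVr.sqrt (hδ.trans_le hδr).ne'))
  · refine (tendsto_atTop_of_le_hasDerivAt (Real.sqrt_pos.2 hδ)
      ((eventually_gt_atTop 0).mono fun r hr ↦ hasDerivAt_integral_of_continuousOn_Ici hV.sqrt hr)
      (hδV.mono fun r hr ↦ Real.sqrt_le_sqrt hr)).const_mul_atTop_of_neg (neg_neg_of_pos ha)
  · filter_upwards [tendsto_norm_cobounded_atTop.eventually (eventually_ge_atTop (1 : ℝ)),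
      tendsto_norm_cobounded_atTop.eventually hV₁, tendsto_norm_cobounded_atTop.eventually hδV,
      tendsto_norm_cobounded_atTop.eventually hV'] with x hx hVx hδx hV'x
    exact mul_le_radialPotential_neg_mul_integral_sqrt hV _ hC.le hδ he hx
      (hVx.differentiableAt (by simp)) hδx hV'x

end IntegralSqrt

theorem laplacian_eq_laplacian_of_contDiffAt {n : ℕ} {f : EuclideanSpace ℝ (Fin n) → ℝ}
    {x : EuclideanSpace ℝ (Fin n)} (hf : ContDiffAt ℝ 2 f x) : laplacian f x = Δ f x := by
  have hf' : DifferentiableAt ℝ (fderiv ℝ f) x :=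
    (hf.fderiv_right (m := 1) (by norm_num)).differentiableAt (by simp)
  rw [InnerProductSpace.laplacian_eq_iteratedFDeriv_orthonormalBasis f
    (EuclideanSpace.basisFun (Fin n) ℝ), laplacian]
  refine Finset.sum_congr rfl fun i _ ↦ ?_
  simp [iteratedFDeriv_two_apply, fderiv_clm_apply hf' (differentiableAt_const _)]

theorem eventually_mul_sq_le_mul_rpow_sub {ε e₁ : ℝ} (hε : 0 ≤ ε) (he₁ : 0 < e₁) (e₂ : ℝ) :
    ∀ᶠ r in atTop, e₁ / 2 * r ^ 2 ≤ e₁ * r ^ (2 + ε) - e₂ := by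
  filter_upwards [eventually_ge_atTop 1, ((tendsto_pow_atTop two_ne_zero).const_mul_atTop
    (half_pos he₁)).eventually_ge_atTop e₂] with r hr hr₂
  have hpow : r ^ 2 ≤ r ^ (2 + ε) := by
    rw [← Real.rpow_two]
    exact Real.rpow_le_rpow_of_exponent_le hr (by linarith)
  linarith [mul_le_mul_of_nonneg_left hpow he₁.le]

theorem exists_le_forall_of_eventually_cobounded {E : Type*} [SeminormedAddCommGroup E]
    {p : E → Prop} (hp : ∀ᶠ x in cobounded E, p x) (R : ℝ) :
    ∃ R', R ≤ R' ∧ ∀ x, R' ≤ ‖x‖ → p x := by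
  obtain ⟨ρ, -, hρ⟩ := hasBasis_cobounded_norm.eventually_iff.1 hp
  exact ⟨max R ρ, le_max_left R ρ, fun x hx ↦ hρ ((le_max_right R ρ).trans hx)⟩

theorem stmt_10_general {E : Type*} [NormedAddCommGroup E] [InnerProductSpace ℝ E]
    [FiniteDimensional ℝ E] {φ : E → ℝ} {V : ℝ → ℝ} {κ e C₁ c₂ c₃ : ℝ}
    (hκ : 0 < κ) (he : 0 ≤ e) (hC₁ : 0 < C₁) (hc₂ : 0 < c₂)
    (hV : ContinuousOn V (Ici 0)) (hV₁ : ∀ᶠ r in atTop, ContDiffAt ℝ 1 V r)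
    (hgrowth : ∀ᶠ r in atTop, κ * r ^ 2 ≤ V r)
    (hV' : ∀ᶠ r in atTop, deriv V r ≤ e * V r ^ (3 / 2 : ℝ))
    (hφ : ∀ᶠ x in cobounded E, ContDiffAt ℝ 2 φ x) (hφpos : ∀ᶠ x in cobounded E, 0 < φ x)
    (hφ₀ : Tendsto φ (cobounded E) (𝓝 0))
    (hsub : ∀ᶠ x in cobounded E, (c₂ * V ‖x‖ - c₃) * φ x ≤ Δ φ x)
    (hsuper : ∀ᶠ x in cobounded E, Δ φ x ≤ C₁ * V ‖x‖ * φ x) :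
    ∃ a₁ a₂ : ℝ, 0 < a₁ ∧ 0 < a₂ ∧ ∃ a₃ a₄ : ℝ, ∀ᶠ x in cobounded E,
      Real.exp (-a₁ * (∫ r in (0 : ℝ)..‖x‖, √(V r)) + a₃) ≤ φ x ^ 2 ∧
        φ x ^ 2 ≤ Real.exp (-a₂ * ‖x‖ ^ 2 + a₄) := by
  have hquad {k : ℝ} (hk : 0 < k) (c : ℝ) : ∀ᶠ r : ℝ in atTop, c ≤ k * r ^ 2 :=
    ((tendsto_pow_atTop two_ne_zero).const_mul_atTop hk).eventually_ge_atTop c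
  obtain ⟨a, ha, c, hlower⟩ := exists_eventually_exp_neg_mul_integral_sqrt_le (δ := 1) hC₁
    one_pos he hφ hφpos hV hV₁
    ((hquad hκ 1).and hgrowth |>.mono fun r hr ↦ hr.1.trans hr.2) hV' hsuper
  have hb : 0 < c₂ * κ / 2 := by positivity
  obtain ⟨c', hupper⟩ := exists_eventually_le_exp_neg_mul_sq (Real.sqrt_pos.2 hb) hφ hφ₀ (by
    filter_upwards [hsub, hφpos, tendsto_norm_cobounded_atTop.eventually hgrowth,
      tendsto_norm_cobounded_atTop.eventually (hquad hb c₃)] with x hx hφx hVx hcx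
    refine (mul_le_mul_of_nonneg_right ?_ hφx.le).trans hx
    rw [Real.sq_sqrt hb.le]
    linarith [mul_le_mul_of_nonneg_left hVx hc₂.le])
  refine ⟨2 * a, √(c₂ * κ / 2), by positivity, Real.sqrt_pos.2 hb, 2 * c, 2 * c', ?_⟩
  filter_upwards [hlower, hupper, hφpos] with x hlx hux hφx
  constructor
  · calc _ = Real.exp (-a * (∫ r in (0 : ℝ)..‖x‖, √(V r)) + c) ^ 2 := by
          rw [← Real.exp_nat_mul]; push_cast; ring_nf
      _ ≤ φ x ^ 2 := by gcongr
  · calc φ x ^ 2 ≤ Real.exp (-√(c₂ * κ / 2) / 2 * ‖x‖ ^ 2 + c') ^ 2 := by gcongr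
      _ = _ := by rw [← Real.exp_nat_mul]; push_cast; ring_nf

/-- **Lemma 6.4 (two-sided decay bounds for the ground state).**
Let `V(x) = V̄(|x|)` with `V̄` positive, C¹, increasing, `V̄(r) ≥ e₁ r^{2+ε} − e₂` and
`V̄' ≤ e₃ V̄^{3/2}`.  If `φ₀ ∈ C²` is strictly positive, vanishes at infinity, and satisfies
`(c₂ V − c₃) φ₀ ≤ Δφ₀ ≤ C₁ V φ₀` for `|x| ≥ R`, then there are `R' ≥ R`, `a₁, a₂ > 0`,
`a₃, a₄ ∈ ℝ` with
`exp(−a₁ ∫₀^{|x|} √{V̄(r)} dr + a₃) ≤ φ₀(x)² ≤ exp(−a₂ |x|² + a₄)` for all `|x| ≥ R'`. -/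
theorem stmt_10 {n : ℕ} (hn : 1 ≤ n)
    (ε e₁ e₃ : ℝ) (hε : 0 < ε) (he₁ : 0 < e₁) (he₃ : 0 < e₃) (e₂ : ℝ) (he₂ : 0 ≤ e₂)
    (Vbar Vbar' : ℝ → ℝ)
    (hVpos : ∀ r : ℝ, 0 ≤ r → 0 < Vbar r)
    (hVderiv : ∀ r : ℝ, 0 ≤ r → HasDerivWithinAt Vbar (Vbar' r) (Set.Ici 0) r)
    (hVderiv_cont : ContinuousOn Vbar' (Set.Ici 0))
    (hVmono : MonotoneOn Vbar (Set.Ici 0))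
    (hVgrowth : ∀ r : ℝ, 0 ≤ r → e₁ * r ^ ((2 : ℝ) + ε) - e₂ ≤ Vbar r)
    (hV'bound : ∀ r : ℝ, 0 ≤ r → Vbar' r ≤ e₃ * Vbar r ^ ((3 : ℝ) / 2))
    (V : EuclideanSpace ℝ (Fin n) → ℝ) (hV : ∀ x, V x = Vbar ‖x‖)
    (φ₀ : EuclideanSpace ℝ (Fin n) → ℝ) (hφC2 : ContDiff ℝ 2 φ₀)
    (hφpos : ∀ x, 0 < φ₀ x)
    (hφdecay : Filter.Tendsto φ₀ (Filter.cocompact _) (nhds 0))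
    (R C₁ c₂ c₃ : ℝ) (hR : 0 ≤ R) (hC₁ : 0 < C₁) (hc₂ : 0 < c₂) (hc₃ : 0 ≤ c₃)
    (hlower : ∀ x : EuclideanSpace ℝ (Fin n), R ≤ ‖x‖ →
      (c₂ * V x - c₃) * φ₀ x ≤ laplacian φ₀ x)
    (hupper : ∀ x : EuclideanSpace ℝ (Fin n), R ≤ ‖x‖ →
      laplacian φ₀ x ≤ C₁ * V x * φ₀ x) :
    ∃ (R' : ℝ), R ≤ R' ∧ ∃ (a₁ a₂ : ℝ), 0 < a₁ ∧ 0 < a₂ ∧ ∃ (a₃ a₄ : ℝ),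
      ∀ x : EuclideanSpace ℝ (Fin n), R' ≤ ‖x‖ →
        Real.exp (-a₁ * (∫ r in (0 : ℝ)..‖x‖, Real.sqrt (Vbar r)) + a₃) ≤ φ₀ x ^ 2 ∧
        φ₀ x ^ 2 ≤ Real.exp (-a₂ * ‖x‖ ^ 2 + a₄) := by
  have hderiv {r : ℝ} (hr : 0 < r) : HasDerivAt Vbar (Vbar' r) r :=
    (hVderiv r hr.le).hasDerivAt (Ici_mem_nhds hr)
  have hC1 {r : ℝ} (hr : 0 < r) : ContDiffAt ℝ 1 Vbar r := by
    simpa using contDiffAt_add_one_of_hasDerivAt (n := 0)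
      ((eventually_gt_nhds hr).mono fun s hs ↦ hderiv hs)
      (contDiffAt_zero.2 ⟨Ici 0, Ici_mem_nhds hr, hVderiv_cont⟩)
  have hlap (x) : laplacian φ₀ x = Δ φ₀ x := laplacian_eq_laplacian_of_contDiffAt hφC2.contDiffAt
  simp only [hV, hlap] at hlower hupper
  rw [← Metric.cobounded_eq_cocompact] at hφdecay
  obtain ⟨a₁, a₂, ha₁, ha₂, a₃, a₄, hbounds⟩ := stmt_10_general (half_pos he₁) he₃.le hC₁ hc₂
    (fun r hr ↦ (hVderiv r hr).continuousWithinAt) ((eventually_gt_atTop 0).mono fun r ↦ hC1)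
    (by filter_upwards [eventually_mul_sq_le_mul_rpow_sub hε.le he₁ e₂, eventually_ge_atTop 0]
          with r hr hr₀ using hr.trans (hVgrowth r hr₀))
    ((eventually_gt_atTop 0).mono fun r hr ↦ (hderiv hr).deriv ▸ hV'bound r hr.le)
    (.of_forall fun x ↦ hφC2.contDiffAt) (.of_forall hφpos) hφdecay
    ((eventually_cobounded_le_norm R).mono hlower) ((eventually_cobounded_le_norm R).mono hupper)
  obtain ⟨R', hRR', hR'⟩ := exists_le_forall_of_eventually_cobounded hbounds R
  exact ⟨R', hRR', a₁, a₂, ha₁, ha₂, a₃, a₄, hR'⟩
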